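/- For every u ∈ ℝ⁷ the following identities hold: φ ∧ i(u)(*₇φ) = −4·*₇(u♭); (*₇φ) ∧ i(u)φ = 3·*₇(u♭); and φ ∧ i(u)φ = 2·*₇(i(u)φ) = 2·u♭ ∧ *₇φ. -/

import Mathlib

open scoped BigOperators

noncomputable section

namespace FMpaper

variable {K : Type*} [NormedField K] [NormedAlgebra ℝ K]

/-- Coefficient model for the exterior algebra of `(ℝⁿ)*` with scalars in `K`:
a form is given by its coefficients on the basis `e^S`, `S ⊆ {0, …, n-1}` sorted. -/
abbrev Form (K : Type*) (n : ℕ) := Finset (Fin n) → K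

variable {n : ℕ}

/-- Sign such that `e^s ∧ e^t = signMerge s t • e^(s ∪ t)` for disjoint sorted `s, t`. -/
def signMerge (s t : Finset (Fin n)) : K :=
  (-1 : K) ^ (((s ×ˢ t).filter (fun p => p.2 < p.1)).card)

/-- Wedge product. -/
def wedge (α β : Form K n) : Form K n :=
  fun u => ∑ s ∈ u.powerset, signMerge s (u \ s) * α s * β (u \ s)

/-- Hodge star operator (for the standard inner product and orientation `e^{0⋯(n-1)}`). -/
def hstar (α : Form K n) : Form K n :=
  fun t => signMerge tᶜ t * α tᶜ

/-- Interior product with the basis vector `e_μ`. -/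
def iprodB (μ : Fin n) (α : Form K n) : Form K n :=
  fun t => if μ ∈ t then 0
    else (-1 : K) ^ ((t.filter (fun j => j < μ)).card) * α (insert μ t)

/-- Interior product with the vector `v`. -/
def iprod (v : Fin n → K) (α : Form K n) : Form K n :=
  fun t => ∑ μ, v μ * iprodB μ α t

/-- The basis covector `e^i` as a 1-form. -/
def e1 (i : Fin n) : Form K n := fun s => if s = {i} then 1 else 0

/-- The covector `v♭` dual to a vector `v`. -/
def flat (v : Fin n → K) : Form K n := ∑ i, v i • e1 i

/-- The vector `α♯` dual to a 1-form `α`. -/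
def sharp1 (α : Form K n) : Fin n → K := fun i => α {i}

/-- The inner product of forms (extended `K`-bilinearly). -/
def inner' (α β : Form K n) : K := ∑ s, α s * β s

/-- The (Euclidean) norm of a form; for an `√-1 ℝ`-valued form `√-1 γ` this is `‖γ‖`. -/
def fnorm (α : Form K n) : ℝ := Real.sqrt (∑ s, ‖α s‖ ^ 2)

/-- `α` is homogeneous of degree `k`. -/
def isGrade (k : ℕ) (α : Form K n) : Prop := ∀ s, s.card ≠ k → α s = 0

/-- Evaluation of a `k`-form on `k` vectors. -/
def evalForm {k : ℕ} (α : Form K n) (v : Fin k → (Fin n → K)) : K :=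
  ∑ s : Finset (Fin n), α s *
    (if h : s.card = k then
      Matrix.det (Matrix.of fun i j => v i ((s.orderIsoOfFin h j : Fin n))) else 0)

/-- The matrix of the skew-symmetric endomorphism `γ♯` associated with a 2-form `γ`
via `⟨γ♯ u, v⟩ = γ(u, v)`. -/
def mat2 (γ : Form K n) : Matrix (Fin n) (Fin n) K :=
  Matrix.of fun i j => if i < j then γ {i, j} else if j < i then - γ {i, j} else 0

/-- The standard `G₂` 3-form `φ = e^{123}+e^{145}+e^{167}+e^{246}−e^{257}−e^{347}−e^{356}`
on `ℝ⁷` (indices `1, …, 7` shifted to `0, …, 6`). -/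
def phi7 : Form K 7 := fun s =>
  if s = ({0, 1, 2} : Finset (Fin 7)) then 1
  else if s = ({0, 3, 4} : Finset (Fin 7)) then 1
  else if s = ({0, 5, 6} : Finset (Fin 7)) then 1
  else if s = ({1, 3, 5} : Finset (Fin 7)) then 1
  else if s = ({1, 4, 6} : Finset (Fin 7)) then -1
  else if s = ({2, 3, 6} : Finset (Fin 7)) then -1
  else if s = ({2, 4, 5} : Finset (Fin 7)) then -1
  else 0

/-- `*₇φ = e^{4567}+e^{2367}+e^{2345}+e^{1357}−e^{1346}−e^{1256}−e^{1247}` on `ℝ⁷`. -/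
def psi7 : Form K 7 := fun s =>
  if s = ({3, 4, 5, 6} : Finset (Fin 7)) then 1
  else if s = ({1, 2, 5, 6} : Finset (Fin 7)) then 1
  else if s = ({1, 2, 3, 4} : Finset (Fin 7)) then 1
  else if s = ({0, 2, 4, 6} : Finset (Fin 7)) then 1
  else if s = ({0, 2, 3, 5} : Finset (Fin 7)) then -1
  else if s = ({0, 1, 4, 5} : Finset (Fin 7)) then -1
  else if s = ({0, 1, 3, 6} : Finset (Fin 7)) then -1
  else 0

/-- The `G₂` 3-form `φ` on `V = span{e₁, …, e₇} ⊂ ℝ⁸`, regarded as a form on `ℝ⁸`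
annihilated by `i(e₀)` (indices `1, …, 7` of `ℝ⁸`). -/
def phi8 : Form K 8 := fun s =>
  if s = ({1, 2, 3} : Finset (Fin 8)) then 1
  else if s = ({1, 4, 5} : Finset (Fin 8)) then 1
  else if s = ({1, 6, 7} : Finset (Fin 8)) then 1
  else if s = ({2, 4, 6} : Finset (Fin 8)) then 1
  else if s = ({2, 5, 7} : Finset (Fin 8)) then -1
  else if s = ({3, 4, 7} : Finset (Fin 8)) then -1
  else if s = ({3, 5, 6} : Finset (Fin 8)) then -1
  else 0

/-- `*₇φ` on `V ⊂ ℝ⁸`, regarded as a 4-form on `ℝ⁸` annihilated by `i(e₀)`. -/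
def psi8 : Form K 8 := fun s =>
  if s = ({4, 5, 6, 7} : Finset (Fin 8)) then 1
  else if s = ({2, 3, 6, 7} : Finset (Fin 8)) then 1
  else if s = ({2, 3, 4, 5} : Finset (Fin 8)) then 1
  else if s = ({1, 3, 5, 7} : Finset (Fin 8)) then 1
  else if s = ({1, 3, 4, 6} : Finset (Fin 8)) then -1
  else if s = ({1, 2, 5, 6} : Finset (Fin 8)) then -1
  else if s = ({1, 2, 4, 7} : Finset (Fin 8)) then -1
  else 0

/-- The standard Cayley 4-form `Φ = e⁰ ∧ φ + *₇φ` on `ℝ⁸`. -/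
def Phi8 : Form K 8 := wedge (e1 0) phi8 + psi8

/-- The index set of `V = span{e₁, …, e₇} ⊂ ℝ⁸`. -/
def Vset : Finset (Fin 8) := {1, 2, 3, 4, 5, 6, 7}

/-- The Hodge star `*₇` of `V ⊂ ℝ⁸` (volume form `e^{1⋯7}`), acting on forms on `ℝ⁸`
annihilated by `i(e₀)`. -/
def star7 (α : Form K 8) : Form K 8 :=
  fun t => if (0 : Fin 8) ∈ t then 0 else signMerge (Vset \ t) t * α (Vset \ t)

/-- `α` is (the pullback of) a form on `V`, i.e. `i(e₀) α = 0`. -/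
def onV (α : Form K 8) : Prop := ∀ s, (0 : Fin 8) ∈ s → α s = 0

/-- `λ²(α) = ½ (e⁰ ∧ α + i(α♯) φ)` for `α ∈ V*`. -/
def lambda2 (α : Form K 8) : Form K 8 :=
  (2 : K)⁻¹ • (wedge (e1 0) α + iprod (sharp1 α) phi8)

/-- `λ⁴(α) = (1/√8) (e⁰ ∧ i(α♯) *₇φ − α ∧ φ)` for `α ∈ V*`. -/
def lambda4 (α : Form K 8) : Form K 8 :=
  (algebraMap ℝ K (Real.sqrt 8))⁻¹ • (wedge (e1 0) (iprod (sharp1 α) psi8) - wedge α phi8)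

/-- `λ⁶(α) = *₈ λ²(α)` for `α ∈ V*`. -/
def lambda6 (α : Form K 8) : Form K 8 := hstar (lambda2 α)

/-- The projection `π²₇(α) = (α + *₈(Φ ∧ α))/4` onto `Λ²₇`. -/
def pi27 (α : Form K 8) : Form K 8 := (4 : K)⁻¹ • (α + hstar (wedge Phi8 α))

/-- The projection `π⁴₇(β) = Σ_{μ=1}^{7} ⟨β, λ⁴(e^μ)⟩ λ⁴(e^μ)` onto `Λ⁴₇`. -/
def pi47 (β : Form K 8) : Form K 8 :=
  ∑ μ : Fin 7, inner' β (lambda4 (e1 μ.succ)) • lambda4 (e1 μ.succ)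

/-- `τ(u₀,u₁,u₂,u₃) = Σ_{μ=1}^{7} λ⁴(e^μ)(u₀,u₁,u₂,u₃) ⬝ λ⁴(e^μ) = π⁴₇(u₀♭∧u₁♭∧u₂♭∧u₃♭)`. -/
def tau4 (u : Fin 4 → (Fin 8 → K)) : Form K 8 :=
  ∑ μ : Fin 7, evalForm (lambda4 (e1 μ.succ)) u • lambda4 (e1 μ.succ)

/-- Partial derivative `∂f^a/∂x^j` at `x`. -/
def pd {m p : ℕ} (f : (Fin m → ℝ) → (Fin p → ℝ)) (x : Fin m → ℝ) (j : Fin m) (a : Fin p) : ℝ :=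
  fderiv ℝ f x (Pi.single j 1) a

/-!
Write `ψ = *φ`. By linearity in `u`, the second and third identities reduce to
`ψ ∧ i(e_μ)φ = 3 *e^μ` and `φ ∧ i(e_μ)φ = 2 *(i(e_μ)φ)`, where `3` is the number of lines of the
Fano plane through a point. The first one follows from the second: `φ ∧ ψ = ⟨φ, φ⟩ vol = 7 vol`,
so applying the antiderivation `i(u)` gives
`7 *u♭ = i(u)φ ∧ ψ - φ ∧ i(u)ψ = 3 *u♭ - φ ∧ i(u)ψ`.
The equality `*(i(u)φ) = u♭ ∧ ψ` is an instance of the rule `*(i(u)α) = (-1)^k u♭ ∧ *α` for `α`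
of degree `k + 1`.
-/

variable {F : Type*} [NormedField F]

section Linearity

variable {ι : Type*} (I : Finset ι) (c : ι → F)

theorem wedge_sum_smul_left (α : ι → Form F n) (β : Form F n) :
    wedge (∑ i ∈ I, c i • α i) β = ∑ i ∈ I, c i • wedge (α i) β := by
  funext t
  simp only [wedge, Finset.sum_apply, Pi.smul_apply, smul_eq_mul, Finset.mul_sum, Finset.sum_mul]
  rw [Finset.sum_comm]
  exact Finset.sum_congr rfl fun _ _ => Finset.sum_congr rfl fun _ _ => by ring

theorem wedge_sum_smul_right (α : Form F n) (β : ι → Form F n) :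
    wedge α (∑ i ∈ I, c i • β i) = ∑ i ∈ I, c i • wedge α (β i) := by
  funext t
  simp only [wedge, Finset.sum_apply, Pi.smul_apply, smul_eq_mul, Finset.mul_sum]
  rw [Finset.sum_comm]
  exact Finset.sum_congr rfl fun _ _ => Finset.sum_congr rfl fun _ _ => by ring

theorem hstar_sum_smul (α : ι → Form F n) :
    hstar (∑ i ∈ I, c i • α i) = ∑ i ∈ I, c i • hstar (α i) := by
  funext t
  simp only [hstar, Finset.sum_apply, Pi.smul_apply, smul_eq_mul, Finset.mul_sum]
  exact Finset.sum_congr rfl fun _ _ => by ring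

end Linearity

theorem iprod_eq_sum (v : Fin n → F) (α : Form F n) : iprod v α = ∑ μ, v μ • iprodB μ α := by
  funext t
  simp only [iprod, Finset.sum_apply, Pi.smul_apply, smul_eq_mul]

theorem iprodB_smul (μ : Fin n) (c : F) (α : Form F n) :
    iprodB μ (c • α) = c • iprodB μ α := by
  funext t
  simp only [iprodB, Pi.smul_apply, smul_eq_mul, mul_ite, mul_zero, mul_left_comm]

theorem iprod_smul (v : Fin n → F) (c : F) (α : Form F n) :
    iprod v (c • α) = c • iprod v α := by
  simp only [iprod_eq_sum, iprodB_smul, Finset.smul_sum, smul_comm c]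

/-! ### Signs of shuffles -/

theorem neg_one_pow_mul_self (j : ℕ) : ((-1) ^ j * (-1) ^ j : F) = 1 := by
  rw [← mul_pow, neg_mul_neg, one_mul, one_pow]

theorem signMerge_empty_left (t : Finset (Fin n)) : (signMerge ∅ t : F) = 1 := by
  simp [signMerge]

theorem signMerge_mul_self (s t : Finset (Fin n)) :
    (signMerge s t * signMerge s t : F) = 1 :=
  neg_one_pow_mul_self _

theorem signMerge_insert_left {μ : Fin n} {s : Finset (Fin n)} (hμ : μ ∉ s)
    (t : Finset (Fin n)) :
    (signMerge (insert μ s) t : F) = (-1) ^ (t.filter (· < μ)).card * signMerge s t := by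
  have hprod : insert μ s ×ˢ t = {μ} ×ˢ t ∪ s ×ˢ t := by
    rw [Finset.insert_eq, Finset.union_product]
  have hdisj : Disjoint ({μ} ×ˢ t) (s ×ˢ t) :=
    Finset.disjoint_product.2 (.inl (Finset.disjoint_singleton_left.2 hμ))
  have hcard : (({μ} ×ˢ t).filter fun p => p.2 < p.1).card = (t.filter (· < μ)).card := by
    rw [Finset.singleton_product, Finset.filter_map, Finset.card_map]
    rfl
  rw [signMerge, signMerge, hprod, Finset.filter_union,
    Finset.card_union_of_disjoint (Finset.disjoint_filter_filter hdisj), hcard, pow_add]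

theorem signMerge_insert_right {μ : Fin n} {t : Finset (Fin n)} (hμ : μ ∉ t)
    (s : Finset (Fin n)) :
    (signMerge s (insert μ t) : F) = (-1) ^ (s.filter (μ < ·)).card * signMerge s t := by
  have hprod : s ×ˢ insert μ t = s ×ˢ {μ} ∪ s ×ˢ t := by
    rw [Finset.insert_eq, Finset.product_union]
  have hdisj : Disjoint (s ×ˢ {μ}) (s ×ˢ t) :=
    Finset.disjoint_product.2 (.inr (Finset.disjoint_singleton_left.2 hμ))
  have hcard : ((s ×ˢ {μ}).filter fun p => p.2 < p.1).card = (s.filter (μ < ·)).card := by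
    rw [Finset.product_singleton, Finset.filter_map, Finset.card_map]
    rfl
  rw [signMerge, signMerge, hprod, Finset.filter_union,
    Finset.card_union_of_disjoint (Finset.disjoint_filter_filter hdisj), hcard, pow_add]

theorem signMerge_singleton_left (μ : Fin n) (t : Finset (Fin n)) :
    (signMerge {μ} t : F) = (-1) ^ (t.filter (· < μ)).card := by
  rw [← insert_empty_eq, signMerge_insert_left (Finset.notMem_empty μ), signMerge_empty_left,
    mul_one]

theorem neg_one_pow_card_lt_mul_card_gt {μ : Fin n} {s : Finset (Fin n)} (hμ : μ ∉ s) :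
    ((-1) ^ (s.filter (· < μ)).card * (-1) ^ (s.filter (μ < ·)).card : F) = (-1) ^ s.card := by
  have hgt : s.filter (μ < ·) = s.filter (¬ · < μ) :=
    Finset.filter_congr fun i hi => by
      rw [not_lt, (ne_of_mem_of_not_mem hi hμ).symm.le_iff_lt]
  rw [← pow_add, hgt, Finset.card_filter_add_card_filter_not]

theorem neg_one_pow_card_lt_mul_card_sdiff_lt {s t : Finset (Fin n)} (hst : s ⊆ t) (μ : Fin n) :
    ((-1) ^ (s.filter (· < μ)).card * (-1) ^ ((t \ s).filter (· < μ)).card : F) =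
      (-1) ^ (t.filter (· < μ)).card := by
  rw [← pow_add, ← Finset.card_union_of_disjoint
    (Finset.disjoint_filter_filter Finset.disjoint_sdiff), ← Finset.filter_union,
    Finset.union_sdiff_of_subset hst]

theorem filter_lt_erase (t : Finset (Fin n)) (μ : Fin n) :
    (t.erase μ).filter (· < μ) = t.filter (· < μ) := by
  rw [Finset.filter_erase, Finset.erase_eq_of_notMem (by simp)]

theorem signMerge_mul_signMerge_swap {s t : Finset (Fin n)} (h : Disjoint s t) :
    (signMerge s t * signMerge t s : F) = (-1) ^ (s.card * t.card) := by
  have hswap : ((t ×ˢ s).filter fun p => p.2 < p.1).card =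
      ((s ×ˢ t).filter fun p => ¬ p.2 < p.1).card := by
    refine Finset.card_equiv (Equiv.prodComm _ _) fun p => ?_
    simp only [Finset.mem_filter, Finset.mem_product, Equiv.prodComm_apply, Prod.fst_swap,
      Prod.snd_swap, not_lt]
    refine ⟨fun ⟨hp, hlt⟩ => ⟨hp.symm, hlt.le⟩, fun ⟨hp, hle⟩ => ⟨hp.symm, hle.lt_of_ne ?_⟩⟩
    exact Finset.disjoint_iff_ne.1 h _ hp.1 _ hp.2
  rw [signMerge, signMerge, ← pow_add, hswap, Finset.card_filter_add_card_filter_not,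
    Finset.card_product]

/-! ### Wedge product, interior product and Hodge star -/

theorem isGrade_ext {k : ℕ} {α β : Form F n} (hα : isGrade k α) (hβ : isGrade k β)
    (h : ∀ t, t.card = k → α t = β t) : α = β := by
  funext t
  by_cases ht : t.card = k
  · exact h t ht
  · rw [hα t ht, hβ t ht]

theorem isGrade_apply_mul_neg_one_pow_card {k : ℕ} {α : Form F n} (hα : isGrade k α)
    (s : Finset (Fin n)) : α s * (-1) ^ s.card = α s * (-1) ^ k := by
  by_cases hk : s.card = k
  · rw [hk]
  · rw [hα s hk, zero_mul, zero_mul]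

theorem isGrade_apply_insert_mul_neg_one_pow_card {k : ℕ} {α : Form F n} (hα : isGrade k α)
    {μ : Fin n} {s : Finset (Fin n)} (hμ : μ ∉ s) :
    α (insert μ s) * (-1) ^ s.card = -(α (insert μ s) * (-1) ^ k) := by
  rw [← isGrade_apply_mul_neg_one_pow_card hα, Finset.card_insert_of_notMem hμ, pow_succ]
  ring

theorem isGrade_smul {k : ℕ} (c : F) {α : Form F n} (hα : isGrade k α) : isGrade k (c • α) := by
  intro s hs
  rw [Pi.smul_apply, hα s hs, smul_zero]

theorem isGrade_e1 (i : Fin n) : isGrade 1 (e1 i : Form F n) := fun s hs =>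
  if_neg fun h : s = {i} => hs (h ▸ Finset.card_singleton i)

theorem isGrade_wedge {k l : ℕ} {α β : Form F n} (hα : isGrade k α) (hβ : isGrade l β) :
    isGrade (k + l) (wedge α β) := by
  intro t ht
  refine Finset.sum_eq_zero fun s hs => ?_
  by_cases hk : s.card = k
  · have hcard := Finset.card_sdiff_add_card_eq_card (Finset.mem_powerset.1 hs)
    rw [hβ (t \ s) (by lia), mul_zero]
  · rw [hα s hk, mul_zero, zero_mul]

theorem isGrade_iprodB {k : ℕ} {α : Form F n} (hα : isGrade (k + 1) α) (μ : Fin n) :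
    isGrade k (iprodB μ α) := by
  intro s hs
  rw [iprodB]
  split_ifs with hμ
  · rfl
  · rw [hα _ (by rw [Finset.card_insert_of_notMem hμ]; lia), mul_zero]

theorem isGrade_iprod {k : ℕ} {α : Form F n} (hα : isGrade (k + 1) α) (v : Fin n → F) :
    isGrade k (iprod v α) := fun s hs =>
  Finset.sum_eq_zero fun μ _ => by rw [isGrade_iprodB hα μ s hs, mul_zero]

theorem isGrade_hstar {k l : ℕ} (hkl : k + l = n) {α : Form F n} (hα : isGrade k α) :
    isGrade l (hstar α) := by
  intro s hs
  have hcard := s.card_add_card_compl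
  rw [Fintype.card_fin] at hcard
  rw [hstar, hα sᶜ (by lia), mul_zero]

theorem wedge_comm {k l : ℕ} {α β : Form F n} (hα : isGrade k α) (hβ : isGrade l β) :
    wedge α β = (-1 : F) ^ (k * l) • wedge β α := by
  funext t
  rw [Pi.smul_apply, smul_eq_mul, wedge, wedge, Finset.mul_sum]
  refine Finset.sum_nbij' (t \ ·) (t \ ·) (by simp) (by simp)
    (fun s hs => Finset.sdiff_sdiff_eq_self (Finset.mem_powerset.1 hs))
    (fun s hs => Finset.sdiff_sdiff_eq_self (Finset.mem_powerset.1 hs)) fun s hs => ?_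
  rw [Finset.sdiff_sdiff_eq_self (Finset.mem_powerset.1 hs)]
  by_cases hk : s.card = k
  · by_cases hl : (t \ s).card = l
    · have hsign := signMerge_mul_signMerge_swap (F := F) (Finset.disjoint_sdiff (s := s) (t := t))
      rw [hk, hl] at hsign
      rw [← hsign]
      linear_combination (-signMerge s (t \ s) * α s * β (t \ s)) *
        signMerge_mul_self (F := F) (t \ s) s
    · simp only [hβ _ hl, mul_zero, zero_mul]
  · simp only [hα _ hk, mul_zero, zero_mul]

theorem wedge_apply_of_support {S : Finset (Finset (Fin n))} {α : Form F n}
    (hα : ∀ s ∉ S, α s = 0) (β : Form F n) (t : Finset (Fin n)) :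
    wedge α β t = ∑ s ∈ S with s ⊆ t, signMerge s (t \ s) * α s * β (t \ s) := by
  rw [wedge]
  refine (Finset.sum_subset (fun s hs => ?_) fun s hs hsS => ?_).symm
  · exact Finset.mem_powerset.2 (Finset.mem_filter.1 hs).2
  · have hs' : s ∉ S := fun h => hsS (Finset.mem_filter.2 ⟨h, Finset.mem_powerset.1 hs⟩)
    rw [hα s hs', mul_zero, zero_mul]

theorem iprodB_apply_of_mem {μ : Fin n} {t : Finset (Fin n)} (hμ : μ ∈ t) (α : Form F n) :
    iprodB μ α t = 0 :=
  if_pos hμ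

theorem iprodB_apply_of_notMem {μ : Fin n} {t : Finset (Fin n)} (hμ : μ ∉ t) (α : Form F n) :
    iprodB μ α t = (-1) ^ (t.filter (· < μ)).card * α (insert μ t) :=
  if_neg hμ

theorem wedge_apply_insert {μ : Fin n} {r : Finset (Fin n)} (hμ : μ ∉ r) (α β : Form F n) :
    wedge α β (insert μ r) = ∑ s ∈ r.powerset, signMerge s (r \ s) *
      ((-1) ^ (s.filter (μ < ·)).card * α s * β (insert μ (r \ s)) +
        (-1) ^ ((r \ s).filter (· < μ)).card * α (insert μ s) * β (r \ s)) := by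
  rw [wedge, Finset.sum_powerset_insert hμ, ← Finset.sum_add_distrib]
  refine Finset.sum_congr rfl fun s hs => ?_
  have hμs : μ ∉ s := fun h => hμ (Finset.mem_powerset.1 hs h)
  have hμrs : μ ∉ r \ s := fun h => hμ (Finset.mem_sdiff.1 h).1
  rw [Finset.insert_sdiff_of_notMem _ hμs, Finset.insert_sdiff_insert,
    Finset.sdiff_insert_of_notMem hμ, signMerge_insert_right hμrs, signMerge_insert_left hμs]
  ring

theorem wedge_iprodB_add_apply_of_mem {k : ℕ} {α : Form F n} (hα : isGrade k α) (β : Form F n)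
    {μ : Fin n} {t : Finset (Fin n)} (hμ : μ ∈ t) :
    wedge (iprodB μ α) β t + (-1) ^ k * wedge α (iprodB μ β) t = 0 := by
  obtain ⟨r, hμr, rfl⟩ : ∃ r, μ ∉ r ∧ insert μ r = t :=
    ⟨t.erase μ, Finset.notMem_erase μ t, Finset.insert_erase hμ⟩
  rw [wedge_apply_insert hμr, wedge_apply_insert hμr, Finset.mul_sum, ← Finset.sum_add_distrib]
  refine Finset.sum_eq_zero fun s hs => ?_
  have hμs : μ ∉ s := fun h => hμr (Finset.mem_powerset.1 hs h)
  have hμrs : μ ∉ r \ s := fun h => hμr (Finset.mem_sdiff.1 h).1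
  have hdegree := isGrade_apply_insert_mul_neg_one_pow_card hα hμs
  rw [← neg_one_pow_card_lt_mul_card_gt hμs] at hdegree
  rw [iprodB_apply_of_mem (Finset.mem_insert_self μ s),
    iprodB_apply_of_mem (Finset.mem_insert_self μ (r \ s)), iprodB_apply_of_notMem hμs,
    iprodB_apply_of_notMem hμrs]
  linear_combination signMerge s (r \ s) * β (insert μ (r \ s)) * hdegree +
    (-1) ^ k * signMerge s (r \ s) * α (insert μ s) * β (insert μ (r \ s)) *
      neg_one_pow_mul_self (F := F) ((r \ s).filter (· < μ)).card

theorem iprodB_wedge_apply_of_notMem {k : ℕ} {α : Form F n} (hα : isGrade k α) (β : Form F n)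
    {μ : Fin n} {t : Finset (Fin n)} (hμ : μ ∉ t) :
    iprodB μ (wedge α β) t = wedge (iprodB μ α) β t + (-1) ^ k * wedge α (iprodB μ β) t := by
  rw [iprodB_apply_of_notMem hμ, wedge_apply_insert hμ, wedge, wedge, Finset.mul_sum,
    Finset.mul_sum, ← Finset.sum_add_distrib]
  refine Finset.sum_congr rfl fun s hs => ?_
  have hst := Finset.mem_powerset.1 hs
  have hμs : μ ∉ s := fun h => hμ (hst h)
  have hμts : μ ∉ t \ s := fun h => hμ (Finset.mem_sdiff.1 h).1
  have hdegree := isGrade_apply_mul_neg_one_pow_card hα s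
  rw [← neg_one_pow_card_lt_mul_card_gt hμs] at hdegree
  rw [iprodB_apply_of_notMem hμs, iprodB_apply_of_notMem hμts,
    ← neg_one_pow_card_lt_mul_card_sdiff_lt hst]
  linear_combination
    signMerge s (t \ s) * (-1) ^ ((t \ s).filter (· < μ)).card * β (insert μ (t \ s)) * hdegree +
    signMerge s (t \ s) * (-1) ^ (s.filter (· < μ)).card * α (insert μ s) * β (t \ s) *
      neg_one_pow_mul_self (F := F) ((t \ s).filter (· < μ)).card

theorem iprodB_wedge {k : ℕ} {α : Form F n} (hα : isGrade k α) (β : Form F n) (μ : Fin n) :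
    iprodB μ (wedge α β) = wedge (iprodB μ α) β + (-1 : F) ^ k • wedge α (iprodB μ β) := by
  funext t
  rw [Pi.add_apply, Pi.smul_apply, smul_eq_mul]
  by_cases hμ : μ ∈ t
  · rw [iprodB_apply_of_mem hμ, wedge_iprodB_add_apply_of_mem hα β hμ]
  · exact iprodB_wedge_apply_of_notMem hα β hμ

theorem iprod_wedge {k : ℕ} {α : Form F n} (hα : isGrade k α) (β : Form F n) (v : Fin n → F) :
    iprod v (wedge α β) = wedge (iprod v α) β + (-1 : F) ^ k • wedge α (iprod v β) := by
  simp only [iprod_eq_sum, iprodB_wedge hα, wedge_sum_smul_left, wedge_sum_smul_right, smul_add,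
    Finset.sum_add_distrib, Finset.smul_sum, smul_comm ((-1 : F) ^ k)]

theorem wedge_e1_apply (μ : Fin n) (β : Form F n) (t : Finset (Fin n)) :
    wedge (e1 μ) β t =
      if μ ∈ t then (-1) ^ (t.filter (· < μ)).card * β (t.erase μ) else 0 := by
  have hsupp : ∀ s ∉ ({{μ}} : Finset (Finset (Fin n))), (e1 μ : Form F n) s = 0 := fun s hs =>
    if_neg (Finset.mem_singleton.not.1 hs)
  rw [wedge_apply_of_support hsupp, Finset.filter_singleton]
  simp only [Finset.singleton_subset_iff]
  split_ifs
  · rw [Finset.sum_singleton, signMerge_singleton_left, Finset.sdiff_singleton_eq_erase,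
      filter_lt_erase, e1, if_pos rfl, mul_one]
  · exact Finset.sum_empty

theorem hstar_iprodB {k : ℕ} {α : Form F n} (hα : isGrade (k + 1) α) (μ : Fin n) :
    hstar (iprodB μ α) = (-1 : F) ^ k • wedge (e1 μ) (hstar α) := by
  funext t
  rw [Pi.smul_apply, smul_eq_mul, wedge_e1_apply, hstar, iprodB]
  by_cases hμ : μ ∈ t
  · have hμt : μ ∉ tᶜ := Finset.notMem_compl.2 hμ
    have hμe : μ ∉ t.erase μ := Finset.notMem_erase μ t
    have hsign : (signMerge tᶜ t : F) =
        (-1) ^ (tᶜ.filter (μ < ·)).card * signMerge tᶜ (t.erase μ) := by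
      rw [← signMerge_insert_right hμe, Finset.insert_erase hμ]
    have hdegree := isGrade_apply_insert_mul_neg_one_pow_card hα hμt
    rw [← neg_one_pow_card_lt_mul_card_gt hμt] at hdegree
    rw [if_neg hμt, if_pos hμ, hstar, Finset.compl_erase, signMerge_insert_left hμt,
      filter_lt_erase, hsign]
    linear_combination signMerge tᶜ (t.erase μ) * hdegree -
      (-1) ^ k * signMerge tᶜ (t.erase μ) * α (insert μ tᶜ) *
        neg_one_pow_mul_self (F := F) (t.filter (· < μ)).card
  · simp [hμ]

theorem hstar_iprod {k : ℕ} {α : Form F n} (hα : isGrade (k + 1) α) (v : Fin n → F) :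
    hstar (iprod v α) = (-1 : F) ^ k • wedge (flat v) (hstar α) := by
  simp only [iprod_eq_sum, flat, hstar_sum_smul, hstar_iprodB hα, wedge_sum_smul_left,
    Finset.smul_sum, smul_comm ((-1 : F) ^ k)]

/-- The volume form `e^{0⋯(n-1)}`, which is the orientation used by `hstar`. -/
def vol : Form F n := fun s => if s = Finset.univ then 1 else 0

theorem wedge_hstar {k : ℕ} {α β : Form F n} (hα : isGrade k α) (hβ : isGrade k β) :
    wedge α (hstar β) = inner' α β • vol := by
  funext t
  rw [wedge, Pi.smul_apply, smul_eq_mul, vol]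
  split_ifs with ht
  · subst ht
    rw [mul_one, Finset.powerset_univ, inner']
    refine Finset.sum_congr rfl fun s _ => ?_
    rw [hstar, ← Finset.compl_eq_univ_sdiff, compl_compl]
    linear_combination (α s * β s) * signMerge_mul_self (F := F) s sᶜ
  · rw [mul_zero]
    refine Finset.sum_eq_zero fun s hs => ?_
    have hst := Finset.mem_powerset.1 hs
    by_cases hk : s.card = k
    · have hlt : s.card < (t \ s)ᶜ.card := by
        refine Finset.card_lt_card ((Finset.ssubset_iff_of_subset ?_).2 ?_)
        · exact fun i hi => by simp [hi]
        · obtain ⟨i, hi⟩ := not_forall.1 (mt Finset.eq_univ_iff_forall.2 ht)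
          exact ⟨i, by simp [hi], fun h => hi (hst h)⟩
      rw [hstar, hβ _ (hk ▸ hlt.ne'), mul_zero, mul_zero]
    · rw [hα _ hk, mul_zero, zero_mul]

theorem iprodB_vol (μ : Fin n) : iprodB μ (vol : Form F n) = hstar (e1 μ) := by
  funext t
  have hiff : insert μ t = Finset.univ ∧ μ ∉ t ↔ tᶜ = {μ} := by
    simp only [Finset.ext_iff, Finset.mem_insert, Finset.mem_univ, Finset.mem_compl,
      Finset.mem_singleton]
    grind
  rw [iprodB, hstar, e1, vol]
  by_cases ht : tᶜ = {μ}
  · obtain ⟨huniv, hμ⟩ := hiff.2 ht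
    rw [if_neg hμ, if_pos huniv, if_pos ht, ht, signMerge_singleton_left]
  · rw [if_neg ht, mul_zero]
    split_ifs with hμ huniv
    · rfl
    · exact absurd (hiff.1 ⟨huniv, hμ⟩) ht
    · exact mul_zero _

theorem iprod_vol (v : Fin n → F) : iprod v vol = hstar (flat v) := by
  simp only [iprod_eq_sum, flat, hstar_sum_smul, iprodB_vol]

/-! ### Extension of scalars -/

section ExtensionOfScalars

variable {L : Type*} [NormedField L] (f : F →+* L)

theorem map_signMerge (s t : Finset (Fin n)) : f (signMerge s t) = signMerge s t := by
  simp [signMerge]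

theorem ringHom_comp_smul (c : F) (α : Form F n) : (f ∘ (c • α) : Form L n) = f c • (f ∘ α) := by
  funext t
  simp

theorem wedge_comp_ringHom (α β : Form F n) :
    wedge (f ∘ α : Form L n) (f ∘ β) = f ∘ wedge α β := by
  funext t
  simp [wedge, map_signMerge]

theorem hstar_comp_ringHom (α : Form F n) : hstar (f ∘ α : Form L n) = f ∘ hstar α := by
  funext t
  simp [hstar, map_signMerge]

theorem iprodB_comp_ringHom (μ : Fin n) (α : Form F n) :
    iprodB μ (f ∘ α : Form L n) = f ∘ iprodB μ α := by
  funext t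
  simp [iprodB, apply_ite f]

theorem ringHom_comp_e1 (i : Fin n) : (f ∘ e1 i : Form L n) = e1 i := by
  funext s
  simp [e1, apply_ite f]

theorem ringHom_comp_phi7 : (f ∘ phi7 : Form L 7) = phi7 := by
  funext s
  simp [phi7, apply_ite f]

theorem ringHom_comp_psi7 : (f ∘ psi7 : Form L 7) = psi7 := by
  funext s
  simp [psi7, apply_ite f]

end ExtensionOfScalars

/-! ### The `G₂` form -/

/-- The lines of the Fano plane on the points `0, …, 6`, in the labelling for which they are the
index sets of the monomials of `phi7`. -/
def fanoLines : Finset (Finset (Fin 7)) :=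
  {{0, 1, 2}, {0, 3, 4}, {0, 5, 6}, {1, 3, 5}, {1, 4, 6}, {2, 3, 6}, {2, 4, 5}}

theorem card_fanoLines : fanoLines.card = 7 := by
  decide +kernel

theorem card_of_mem_fanoLines : ∀ s ∈ fanoLines, s.card = 3 := by
  decide +kernel

theorem phi7_eq_zero_of_notMem_fanoLines {s : Finset (Fin 7)} (hs : s ∉ fanoLines) :
    (phi7 s : F) = 0 := by
  simp only [fanoLines, Finset.mem_insert, Finset.mem_singleton, not_or] at hs
  simp only [phi7, hs, if_false]

theorem phi7_mul_self_of_mem_fanoLines {s : Finset (Fin 7)} (hs : s ∈ fanoLines) :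
    (phi7 s * phi7 s : F) = 1 := by
  simp only [fanoLines, Finset.mem_insert, Finset.mem_singleton] at hs
  unfold phi7
  split_ifs <;> simp_all

theorem isGrade_phi7 : isGrade 3 (phi7 : Form F 7) := fun s hs =>
  phi7_eq_zero_of_notMem_fanoLines fun hmem => hs (card_of_mem_fanoLines s hmem)

theorem inner'_phi7_self : inner' (phi7 : Form F 7) phi7 = 7 :=
  calc inner' (phi7 : Form F 7) phi7
    _ = ∑ s ∈ fanoLines, phi7 s * phi7 s :=
      (Finset.sum_subset (Finset.subset_univ _) fun s _ hs => by
        rw [phi7_eq_zero_of_notMem_fanoLines hs, zero_mul]).symm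
    _ = ∑ s ∈ fanoLines, 1 := Finset.sum_congr rfl fun s hs => phi7_mul_self_of_mem_fanoLines hs
    _ = 7 := by rw [Finset.sum_const, card_fanoLines, nsmul_one, Nat.cast_ofNat]

/-! `phi7` and `psi7` are defined over `ℚ`, where identities between coefficients can be decided by
evaluation; they then hold over every extension field. -/

theorem hstar_phi7_rat : hstar phi7 = (psi7 : Form ℚ 7) := by
  have h : ∀ t, hstar phi7 t = (psi7 t : ℚ) := by decide +kernel
  exact funext h

theorem psi7_rat_eq_zero_of_notMem {s : Finset (Fin 7)} (hs : s ∉ fanoLines.image compl) :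
    (psi7 s : ℚ) = 0 := by
  have hcompl : sᶜ ∉ fanoLines := fun h =>
    hs (Finset.mem_image.2 ⟨sᶜ, h, compl_compl s⟩)
  rw [← hstar_phi7_rat, hstar, phi7_eq_zero_of_notMem_fanoLines hcompl, mul_zero]

section CharZero

variable [CharZero F]

theorem hstar_phi7 : hstar phi7 = (psi7 : Form F 7) := by
  simpa only [← hstar_comp_ringHom, ringHom_comp_phi7, ringHom_comp_psi7] using
    congrArg (algebraMap ℚ F ∘ ·) hstar_phi7_rat

theorem isGrade_psi7 : isGrade 4 (psi7 : Form F 7) := by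
  rw [← hstar_phi7]
  exact isGrade_hstar rfl isGrade_phi7

theorem wedge_phi7_iprodB_phi7_rat (μ : Fin 7) :
    wedge (phi7 : Form ℚ 7) (iprodB μ phi7) = (2 : ℚ) • hstar (iprodB μ phi7) := by
  refine isGrade_ext (isGrade_wedge isGrade_phi7 (isGrade_iprodB isGrade_phi7 μ))
    (isGrade_smul 2 (isGrade_hstar rfl (isGrade_iprodB isGrade_phi7 μ))) fun t => ?_
  rw [wedge_apply_of_support fun s hs => phi7_eq_zero_of_notMem_fanoLines hs]
  revert μ t
  decide +kernel

theorem wedge_psi7_iprodB_phi7_rat (μ : Fin 7) :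
    wedge (psi7 : Form ℚ 7) (iprodB μ phi7) = (3 : ℚ) • hstar (e1 μ) := by
  refine isGrade_ext (isGrade_wedge isGrade_psi7 (isGrade_iprodB isGrade_phi7 μ))
    (isGrade_smul 3 (isGrade_hstar rfl (isGrade_e1 μ))) fun t => ?_
  rw [wedge_apply_of_support fun s hs => psi7_rat_eq_zero_of_notMem hs]
  revert μ t
  decide +kernel

theorem wedge_phi7_iprodB_phi7 (μ : Fin 7) :
    wedge (phi7 : Form F 7) (iprodB μ phi7) = (2 : F) • hstar (iprodB μ phi7) := by
  simpa only [ringHom_comp_smul, ← wedge_comp_ringHom, ← iprodB_comp_ringHom, ← hstar_comp_ringHom,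
    ringHom_comp_phi7, map_ofNat] using
    congrArg (algebraMap ℚ F ∘ ·) (wedge_phi7_iprodB_phi7_rat μ)

theorem wedge_psi7_iprodB_phi7 (μ : Fin 7) :
    wedge (psi7 : Form F 7) (iprodB μ phi7) = (3 : F) • hstar (e1 μ) := by
  simpa only [ringHom_comp_smul, ← wedge_comp_ringHom, ← iprodB_comp_ringHom, ← hstar_comp_ringHom,
    ringHom_comp_phi7, ringHom_comp_psi7, ringHom_comp_e1, map_ofNat] using
    congrArg (algebraMap ℚ F ∘ ·) (wedge_psi7_iprodB_phi7_rat μ)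

theorem wedge_phi7_psi7 : wedge (phi7 : Form F 7) psi7 = (7 : F) • vol := by
  rw [← hstar_phi7, wedge_hstar isGrade_phi7 isGrade_phi7, inner'_phi7_self]

theorem hstar_iprod_phi7 (u : Fin 7 → F) : hstar (iprod u phi7) = wedge (flat u) psi7 := by
  rw [hstar_iprod isGrade_phi7, hstar_phi7, neg_one_sq, one_smul]

theorem wedge_phi7_iprod_phi7 (u : Fin 7 → F) :
    wedge phi7 (iprod u phi7) = (2 : F) • hstar (iprod u phi7) := by
  simp only [iprod_eq_sum, wedge_sum_smul_right, hstar_sum_smul, wedge_phi7_iprodB_phi7,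
    Finset.smul_sum, smul_comm (2 : F)]

theorem wedge_psi7_iprod_phi7 (u : Fin 7 → F) :
    wedge psi7 (iprod u phi7) = (3 : F) • hstar (flat u) := by
  simp only [iprod_eq_sum, flat, wedge_sum_smul_right, hstar_sum_smul, wedge_psi7_iprodB_phi7,
    Finset.smul_sum, smul_comm (3 : F)]

theorem wedge_phi7_iprod_psi7 (u : Fin 7 → F) :
    wedge phi7 (iprod u psi7) = (-4 : F) • hstar (flat u) := by
  have hcomm : wedge (iprod u phi7) psi7 = (3 : F) • hstar (flat u) := by
    rw [wedge_comm (isGrade_iprod isGrade_phi7 u) isGrade_psi7, wedge_psi7_iprod_phi7,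
      Even.neg_one_pow (by decide), one_smul]
  have hleibniz : (7 : F) • hstar (flat u) =
      (3 : F) • hstar (flat u) - wedge phi7 (iprod u psi7) := by
    rw [← hcomm, ← iprod_vol, ← iprod_smul, ← wedge_phi7_psi7, iprod_wedge isGrade_phi7,
      Odd.neg_one_pow (by decide), neg_one_smul, ← sub_eq_add_neg]
  calc wedge phi7 (iprod u psi7)
    _ = (3 : F) • hstar (flat u) - (7 : F) • hstar (flat u) := by rw [hleibniz, sub_sub_cancel]
    _ = (-4 : F) • hstar (flat u) := by rw [← sub_smul]; norm_num

theorem statement2_general (u : Fin 7 → F) :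
    wedge phi7 (iprod u psi7) = (-4 : F) • hstar (flat u) ∧
    wedge psi7 (iprod u phi7) = (3 : F) • hstar (flat u) ∧
    wedge phi7 (iprod u phi7) = (2 : F) • hstar (iprod u phi7) ∧
    wedge phi7 (iprod u phi7) = (2 : F) • wedge (flat u) psi7 :=
  ⟨wedge_phi7_iprod_psi7 u, wedge_psi7_iprod_phi7 u, wedge_phi7_iprod_phi7 u,
    hstar_iprod_phi7 u ▸ wedge_phi7_iprod_phi7 u⟩

end CharZero

/-- Lemma 3.1.  For every `u ∈ ℝ⁷`:
`φ ∧ i(u) *₇φ = -4 *₇(u♭)`,  `*₇φ ∧ i(u)φ = 3 *₇(u♭)`,  and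
`φ ∧ i(u)φ = 2 *₇(i(u)φ) = 2 u♭ ∧ *₇φ`. -/
theorem statement2 (u : Fin 7 → ℝ) :
    wedge phi7 (iprod u psi7) = (-4 : ℝ) • hstar (flat u) ∧
    wedge psi7 (iprod u phi7) = (3 : ℝ) • hstar (flat u) ∧
    wedge phi7 (iprod u phi7) = (2 : ℝ) • hstar (iprod u phi7) ∧
    wedge phi7 (iprod u phi7) = (2 : ℝ) • wedge (flat u) psi7 :=
  statement2_general u

end FMpaper
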